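/- (Least period of the harmonic highway) Let k > 1 and let s be the trace sequence of the ant L^{2k}R started from (C_{k,1}^{0}, (0,0), (0,1)). Then s is periodic with period 32k+4 (s_{t+32k+4} = s_t for all t ≥ 0) and 32k+4 is its smallest period: for every p with 0 < p < 32k+4 there exists t with s_{t+p} ≠ s_t. -/

import Mathlib

/-- Cells of the grid `ℤ²`. -/
abbrev Cell : Type := ℤ × ℤ

/-- The four unit directions of `ℤ²` (the state set `Q`). -/
inductive Dir : Type
  | E | N | W | S
deriving DecidableEq

/-- Rotation by 90° counterclockwise. -/
def Dir.left : Dir → Dir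
  | .E => .N | .N => .W | .W => .S | .S => .E

/-- Rotation by 90° clockwise. -/
def Dir.right : Dir → Dir
  | .E => .S | .S => .W | .W => .N | .N => .E

/-- The unit vector of a direction. -/
def Dir.vec : Dir → Cell
  | .E => (1, 0) | .N => (0, 1) | .W => (-1, 0) | .S => (0, -1)

/-- Configurations: a picture `ℤ² → ℤ/nℤ`, a position and a direction. -/
abbrev Config (n : ℕ) : Type := (Cell → ZMod n) × Cell × Dir

/-- One step of the generalised ant whose rule word over the alphabet `ℤ/nℤ` is
described by `isL : ZMod n → Bool` (`isL a = true` iff the ant turns left on symbol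
`a`): the symbol under the ant is increased by `1 (mod n)`, the ant turns left
(counterclockwise) or right (clockwise), and moves one step in its new direction. -/
def antStep (n : ℕ) (isL : ZMod n → Bool) (cfg : Config n) : Config n :=
  let C := cfg.1
  let p := cfg.2.1
  let d' := if isL (C p) then cfg.2.2.left else cfg.2.2.right
  (Function.update C p (C p + 1), p + d'.vec, d')

/-- The rule word `L^{2k}R`: the ant turns left on symbols `0, …, 2k−1` and right
on symbol `2k` (alphabet `ℤ/(2k+1)ℤ`). -/
def isL2kR (k : ℕ) : ZMod (2 * k + 1) → Bool := fun a => decide (a.val < 2 * k)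

/-- The picture `C_{k,i}^{n} : ℤ² → ℤ/(2k+1)ℤ`. -/
def pic (k : ℕ) (i : ZMod (2 * k + 1)) (n : ℕ) : Cell → ZMod (2 * k + 1) := fun q =>
  if q.2 = (n : ℤ) ∧ (q.1 = 1 - (n : ℤ) ∨ q.1 = 2 - (n : ℤ)) then i
  else if q.1 = 1 - (n : ℤ) ∧ q.2 = (n : ℤ) - 1 then i + 1
  else if q.1 = 2 - (n : ℤ) ∧ q.2 = (n : ℤ) - 1 then i - 1
  else if q.2 = -q.1 - 2 ∧ -(n : ℤ) ≤ q.1 ∧ q.1 ≤ -1 then ((2 * k : ℕ) : ZMod (2 * k + 1))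
  else if q.2 = -q.1 + 2 ∧ 2 ≤ q.1 ∧ q.1 ≤ (n : ℤ) + 1 then ((2 * k : ℕ) : ZMod (2 * k + 1)) - 1
  else if q.2 = -q.1 + 1 ∧ 2 ≤ q.1 ∧ q.1 ≤ (n : ℤ) + 1 then ((2 * k : ℕ) : ZMod (2 * k + 1)) - 2
  else 0

/-- The trace of the ant `L^{2k}R` started from `(C_{k,i}^{0}, (0,0), ↑)`:
`trace k i t` is the symbol read at time `t`. -/
def trace (k : ℕ) (i : ZMod (2 * k + 1)) (t : ℕ) : ZMod (2 * k + 1) :=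
  ((antStep (2 * k + 1) (isL2kR k))^[t] (pic k i 0, ((0, 0) : Cell), Dir.N)).1
    ((antStep (2 * k + 1) (isL2kR k))^[t] (pic k i 0, ((0, 0) : Cell), Dir.N)).2.1

/-!
On symbols other than the last one, `m`, the ant of the rule word `L^m R` circles around a unit
square, raising its four symbols once per round, until one of them reaches `m` and throws the ant
out by a right turn. From the picture `C_{k,1}^0` (with `m = 2k`) it performs three such loops, a
zigzag of 3 steps, a fourth loop and a zigzag of 9 steps, `16 m + 4` steps in all, and then sees its
initial surroundings translated by `(-2, 2)`. The symbols that differ after the translation lie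
behind the ant and are never read again, so the trace is periodic. The period is least because the
ant turns right three times in a row exactly once per period, in the long zigzag.
-/

namespace Ant

section Reads

variable {n : ℕ} {isL : ZMod n → Bool}

/-- The symbol under the ant. -/
def symbol (A : Config n) : ZMod n := A.1 A.2.1

/-- The run relation: from `A` the ant reads the word `w`, one symbol per step, and is then in
the configuration `B`. -/
def Reads (isL : ZMod n → Bool) (A : Config n) : List (ZMod n) → Config n → Prop
  | [], B => A = B
  | a :: w, B => symbol A = a ∧ Reads isL (antStep n isL A) w B

theorem Reads.append {A B D : Config n} {u v : List (ZMod n)} (hu : Reads isL A u B)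
    (hv : Reads isL B v D) : Reads isL A (u ++ v) D := by
  induction u generalizing A with
  | nil => rwa [show A = B from hu]
  | cons a u ih => exact ⟨hu.1, ih hu.2⟩

theorem Reads.iterate_length {A B : Config n} {w : List (ZMod n)} (h : Reads isL A w B) :
    (antStep n isL)^[w.length] A = B := by
  induction w generalizing A with
  | nil => exact h
  | cons a w ih => exact ih h.2

theorem Reads.symbol_iterate {A B : Config n} {w : List (ZMod n)} (h : Reads isL A w B)
    {i : ℕ} (hi : i < w.length) : symbol ((antStep n isL)^[i] A) = w[i] := by
  induction w generalizing A i with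
  | nil => exact absurd hi (Nat.not_lt_zero i)
  | cons a w ih =>
    cases i with
    | zero => exact h.1
    | succ i => exact ih h.2 (Nat.lt_of_succ_lt_succ hi)

theorem Reads.turnLeft {C : Cell → ZMod n} {p : Cell} {d : Dir} {a : ZMod n} {w : List (ZMod n)}
    {B : Config n} (ha : C p = a) (hL : isL a = true)
    (h : Reads isL (Function.update C p (a + 1), p + d.left.vec, d.left) w B) :
    Reads isL (C, p, d) (a :: w) B := by
  subst ha
  exact ⟨rfl, by simpa [antStep, hL] using h⟩

theorem Reads.turnRight {C : Cell → ZMod n} {p : Cell} {d : Dir} {a : ZMod n} {w : List (ZMod n)}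
    {B : Config n} (ha : C p = a) (hR : isL a = false)
    (h : Reads isL (Function.update C p (a + 1), p + d.right.vec, d.right) w B) :
    Reads isL (C, p, d) (a :: w) B := by
  subst ha
  exact ⟨rfl, by simpa [antStep, hR] using h⟩

/-- The configuration moved by the vector `v`. -/
def translate (v : Cell) (A : Config n) : Config n :=
  (fun q => A.1 (q - v), A.2.1 + v, A.2.2)

@[simp]
theorem symbol_translate (v : Cell) (A : Config n) : symbol (translate v A) = symbol A := by
  simp [symbol, translate]

theorem antStep_translate (v : Cell) :
    Function.Semiconj (translate v) (antStep n isL) (antStep n isL) := by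
  rintro ⟨C, p, d⟩
  ext1
  · funext q
    simp [antStep, translate, Function.update_apply, sub_eq_iff_eq_add]
  · simp [antStep, translate, add_right_comm]

theorem symbol_iterate_eq_getElem_mod {S : Set (Config n)} {w : List (ZMod n)} (hw : 0 < w.length)
    (hS : ∀ A ∈ S, ∃ B ∈ S, ∃ v, Reads isL A w (translate v B)) {A : Config n} (hA : A ∈ S)
    (t : ℕ) : symbol ((antStep n isL)^[t] A) = w[t % w.length]'(Nat.mod_lt t hw) := by
  induction t using Nat.strong_induction_on generalizing A with
  | _ t ih =>
    obtain ⟨B, hB, v, hAB⟩ := hS A hA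
    rcases lt_or_ge t w.length with ht | ht
    · simpa [Nat.mod_eq_of_lt ht] using hAB.symbol_iterate ht
    · obtain ⟨t, rfl⟩ := Nat.exists_eq_add_of_le' ht
      rw [Function.iterate_add_apply, hAB.iterate_length,
        ← ((antStep_translate v).iterate_right t).eq, symbol_translate, ih t (by omega) hB]
      simp

end Reads

section Loop

variable {n : ℕ} {isL : ZMod n → Bool}

/-- The four cells of the unit square on which an ant at `p` heading to `d` circles as long as it
turns left, in order of visit. -/
def loop (p : Cell) (d : Dir) : List Cell :=
  [p, p + d.left.vec, p + d.left.vec - d.vec, p - d.vec]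

/-- The word read in `r` rounds along cells that initially carry the symbols of `l`. -/
def roundsWord (l : List ℕ) (r : ℕ) : List (ZMod n) :=
  (List.range r).flatMap fun j => l.map fun a => ((a + j : ℕ) : ZMod n)

theorem length_roundsWord (l : List ℕ) (r : ℕ) :
    (roundsWord l r : List (ZMod n)).length = r * l.length := by
  simp [roundsWord]

theorem reads_round (C : Cell → ZMod n) (p : Cell) (d : Dir)
    (h : ∀ q ∈ loop p d, isL (C q) = true) :
    Reads isL (C, p, d) ((loop p d).map C)
      (fun q => if q ∈ loop p d then C q + 1 else C q, p, d) := by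
  simp only [loop, List.forall_mem_cons] at h
  obtain ⟨x, y⟩ := p
  obtain ⟨h₁, h₂, h₃, h₄, -⟩ := h
  refine .turnLeft rfl h₁ (.turnLeft ?_ h₂ (.turnLeft ?_ h₃ (.turnLeft ?_ h₄ ?_)))
  rotate_right
  · refine Prod.ext (funext fun q => ?_) (Prod.ext ?_ ?_) <;> cases d <;>
      simp [loop, Dir.left, Dir.vec, Function.update_apply, sub_eq_add_neg] <;> grind
  all_goals cases d <;> simp [Dir.left, Dir.vec, sub_eq_add_neg]

theorem reads_rounds {C : Cell → ZMod n} {p : Cell} {d : Dir} {l : List ℕ} {r : ℕ}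
    (hl : (loop p d).map C = l.map (↑)) (h : ∀ j < r, ∀ a ∈ l, isL (a + j : ℕ) = true) :
    Reads isL (C, p, d) (roundsWord l r)
      (fun q => if q ∈ loop p d then C q + r else C q, p, d) := by
  induction r with
  | zero => simp [roundsWord, Reads]
  | succ r ih =>
    have hmap : (loop p d).map (fun q => if q ∈ loop p d then C q + r else C q) =
        l.map fun a => ((a + r : ℕ) : ZMod n) := by
      rw [List.map_congr_left (g := (· + (r : ZMod n)) ∘ C) fun q hq => by simp [hq],
        ← List.map_map, hl]
      simp
    have hround := reads_round (isL := isL) (fun q => if q ∈ loop p d then C q + r else C q) p d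
      fun q hq => by
        obtain ⟨a, ha, haq⟩ := List.mem_map.1 (hmap ▸ List.mem_map_of_mem hq)
        exact haq ▸ h r r.lt_succ_self a ha
    convert (ih fun j hj => h j (hj.trans r.lt_succ_self)).append hround using 1
    · rw [hmap, roundsWord, roundsWord, List.range_succ, List.flatMap_append,
        List.flatMap_singleton]
    · ext1
      · funext q; dsimp only; split_ifs <;> simp [add_assoc]
      · rfl

end Loop

section Rule

/-- The rule word `L^m R`, whose right-turning symbol `m` is `-1` in `ZMod (m + 1)`. For `m = 2 * k`
this is `isL2kR k` by definition. -/
def isLPowR (m : ℕ) : ZMod (m + 1) → Bool := fun a => decide (a.val < m)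

variable {m : ℕ}

theorem isLPowR_eq_true {a : ZMod (m + 1)} : isLPowR m a = true ↔ a ≠ -1 := by
  rw [isLPowR, decide_eq_true_iff, ne_eq, ← (ZMod.val_injective (m + 1)).eq_iff, ZMod.val_neg_one]
  have := a.val_lt
  omega

theorem isLPowR_neg_one : isLPowR m (-1) = false := by
  simp [← Bool.not_eq_true, isLPowR_eq_true]

theorem natCast_ne_neg_one {a : ℕ} (ha : a < m) : (a : ZMod (m + 1)) ≠ -1 := by
  rw [ne_eq, eq_neg_iff_add_eq_zero, ← Nat.cast_add_one, ZMod.natCast_eq_zero_iff]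
  exact Nat.not_dvd_of_pos_of_lt a.succ_pos (Nat.succ_lt_succ ha)

theorem neg_two_ne_neg_one (hm : 0 < m) : (-2 : ZMod (m + 1)) ≠ -1 := fun h =>
  natCast_ne_neg_one hm (by linear_combination -h)

theorem reads_rounds_turnRight {C C' : Cell → ZMod (m + 1)} {p : Cell} {d : Dir} {a : ℕ}
    {l : List ℕ} (hl : (loop p d).map C = (a :: l).map (↑)) (ham : a ≤ m) (hla : ∀ b ∈ l, b ≤ a)
    (hC' : ∀ q, C' q = if q = p then 0 else if q ∈ loop p d then C q - (a + 1) else C q) :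
    Reads (isLPowR m) (C, p, d) (roundsWord (a :: l) (m - a) ++ [-1])
      (C', p + d.right.vec, d.right) := by
  have hlt : ∀ j < m - a, ∀ b ∈ a :: l, b + j < m := by
    intro j hj b hb
    have : b ≤ a := (List.mem_cons.1 hb).elim le_of_eq (hla b)
    omega
  have hrounds := reads_rounds (isL := isLPowR m) hl fun j hj b hb =>
    isLPowR_eq_true.2 (natCast_ne_neg_one (hlt j hj b hb))
  have hcast : ((m - a : ℕ) : ZMod (m + 1)) = -(a + 1) := by
    rw [eq_neg_iff_add_eq_zero, ← Nat.cast_add_one, ← Nat.cast_add, ← Nat.add_assoc,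
      Nat.sub_add_cancel ham, ZMod.natCast_self]
  have hCp : C p = a := (List.cons.inj hl).1
  refine hrounds.append (.turnRight ?_ isLPowR_neg_one ?_)
  · simp [loop, hCp, hcast]
  · simp [Reads, funext_iff, Function.update_apply, hC', hcast, sub_eq_add_neg]

end Rule

section Window

/-- The cells `(x, y)` with `-2 ≤ x ≤ 2` and `-1 ≤ y ≤ 2`, as a matrix laid out like the grid: the
first row is `y = 2`, the first column is `x = -2`. -/
def windowCell (i : Fin 4) (j : Fin 5) : Cell := ((j : ℤ) - 2, 2 - (i : ℤ))

/-- The picture `C` with the entries of `M` painted over the window. -/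
noncomputable def paint {α : Type*} (M : Matrix (Fin 4) (Fin 5) α) (C : Cell → α) (q : Cell) : α :=
  if q ∈ Set.Icc (-2, -1) (2, 2) then
    M (Fin.ofNat 4 (2 - q.2).toNat) (Fin.ofNat 5 (q.1 + 2).toNat)
  else C q

theorem paint_windowCell {α : Type*} (M : Matrix (Fin 4) (Fin 5) α) (C : Cell → α) (i j) :
    paint M C (windowCell i j) = M i j := by
  revert i j
  simp [Fin.forall_fin_succ, paint, windowCell]

theorem eq_paint {α : Type*} {M : Matrix (Fin 4) (Fin 5) α} {C D : Cell → α}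
    (hin : ∀ i j, D (windowCell i j) = M i j) (hout : ∀ q ∉ Set.Icc (-2, -1) (2, 2), D q = C q) :
    D = paint M C := by
  ext ⟨x, y⟩
  by_cases hq : (x, y) ∈ Set.Icc ((-2, -1) : Cell) (2, 2)
  · obtain ⟨⟨hx, hy⟩, hx', hy'⟩ := id hq
    dsimp only at hx hy hx' hy'
    rw [paint, if_pos hq, ← hin]
    congr 1
    simp [windowCell]
    omega
  · rw [paint, if_neg hq, hout _ hq]

variable {m : ℕ}

theorem reads_paint_rounds_turnRight {M M' : Matrix (Fin 4) (Fin 5) (ZMod (m + 1))}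
    {C : Cell → ZMod (m + 1)} {p : Cell} {d : Dir} {a : ℕ} {l : List ℕ}
    (hp : ∀ q ∈ loop p d, q ∈ Set.Icc (-2, -1) (2, 2))
    (hl : (loop p d).map (paint M C) = (a :: l).map (↑)) (ham : a ≤ m) (hla : ∀ b ∈ l, b ≤ a)
    (hM' : ∀ i j, M' i j = if windowCell i j = p then 0
      else if windowCell i j ∈ loop p d then M i j - (a + 1) else M i j) :
    Reads (isLPowR m) (paint M C, p, d) (roundsWord (a :: l) (m - a) ++ [-1])
      (paint M' C, p + d.right.vec, d.right) := by
  refine reads_rounds_turnRight hl ham hla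
    (congrFun (eq_paint (fun i j => ?_) fun q hq => ?_).symm)
  · simp [hM', paint_windowCell]
  · have hqp : q ≠ p := by rintro rfl; exact hq (hp q (by simp [loop]))
    simp [paint, hq, hqp, mt (hp q) hq]

/-- The symbols around the ant at the seven landmarks of one period of the highway: at the start,
after each of the first three loops, after the short zigzag, after the last loop, and at the end. -/
def highwayWindow (m : ℕ) : Fin 7 → Matrix (Fin 4) (Fin 5) (ZMod (m + 1)) :=
  ![!![0,  0,  0,  0,  0;
       0,  0,  0,  0,  0;
       0,  0,  0,  1,  1;
       0,  0,  0,  2,  0],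
    !![0,  0,  0,  0,  0;
       0,  0,  0,  0,  0;
       0, -1,  0,  1,  1;
       0, -1, -1,  2,  0],
    !![0,  0,  0,  0,  0;
       0,  0, -2, -2,  0;
       0, -1, -2,  0,  1;
       0, -1, -1,  2,  0],
    !![0,  0,  0,  0,  0;
       0,  0, -2, -2,  0;
       0, -1, -2, -3, -2;
       0, -1, -1,  0, -3],
    !![0,  0,  0,  0,  0;
       0,  0, -2, -2,  0;
       0,  0, -1, -3, -2;
       0, -1,  0,  0, -3],
    !![0,  0,  0,  0,  0;
      -1,  0, -2, -2,  0;
      -1, -1, -1, -3, -2;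
       0, -1,  0,  0, -3],
    !![0,  1,  1,  0,  0;
       0,  2,  0, -2,  0;
      -1,  0,  0, -3, -2;
       0, -1,  0,  0, -3]]

theorem reads_firstLoop (C : Cell → ZMod (m + 1)) :
    Reads (isLPowR m) (paint (highwayWindow m 0) C, (0, 0), Dir.N)
      (roundsWord [0, 0, 0, 0] m ++ [-1]) (paint (highwayWindow m 1) C, (1, 0), Dir.E) := by
  refine reads_paint_rounds_turnRight (p := (0, 0)) (d := .N) ?_ ?_ m.zero_le (by simp) ?_
  · simp [loop, Dir.left, Dir.vec, Prod.le_def]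
  · simp [paint, highwayWindow, loop, Dir.left, Dir.vec, Prod.le_def, -Fin.ofNat_eq_cast]
  · intro i j
    fin_cases i <;> fin_cases j <;>
      simp [windowCell, highwayWindow, loop, Dir.left, Dir.vec]

theorem reads_secondLoop (C : Cell → ZMod (m + 1)) (hm : 1 ≤ m) :
    Reads (isLPowR m) (paint (highwayWindow m 1) C, (1, 0), Dir.E)
      (roundsWord [1, 0, 0, 0] (m - 1) ++ [-1]) (paint (highwayWindow m 2) C, (1, -1), Dir.S) := by
  refine reads_paint_rounds_turnRight (p := (1, 0)) (d := .E) ?_ ?_ hm (by simp) ?_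
  · simp [loop, Dir.left, Dir.vec, Prod.le_def]
  · simp [paint, highwayWindow, loop, Dir.left, Dir.vec, Prod.le_def, -Fin.ofNat_eq_cast]
  · intro i j
    fin_cases i <;> fin_cases j <;>
      simp [windowCell, highwayWindow, loop, Dir.left, Dir.vec] <;> norm_num

theorem reads_thirdLoop (C : Cell → ZMod (m + 1)) (hm : 2 ≤ m) :
    Reads (isLPowR m) (paint (highwayWindow m 2) C, (1, -1), Dir.S)
      (roundsWord [2, 0, 1, 0] (m - 2) ++ [-1]) (paint (highwayWindow m 3) C, (0, -1), Dir.W) := by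
  refine reads_paint_rounds_turnRight (p := (1, -1)) (d := .S) ?_ ?_ hm (by simp) ?_
  · simp [loop, Dir.left, Dir.vec, Prod.le_def]
  · simp [paint, highwayWindow, loop, Dir.left, Dir.vec, Prod.le_def, -Fin.ofNat_eq_cast]
  · intro i j
    fin_cases i <;> fin_cases j <;>
      simp [windowCell, highwayWindow, loop, Dir.left, Dir.vec] <;> norm_num

theorem reads_fourthLoop (C : Cell → ZMod (m + 1)) :
    Reads (isLPowR m) (paint (highwayWindow m 4) C, (-1, 1), Dir.N)
      (roundsWord [0, 0, 0, 0] m ++ [-1]) (paint (highwayWindow m 5) C, (0, 1), Dir.E) := by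
  refine reads_paint_rounds_turnRight (p := (-1, 1)) (d := .N) ?_ ?_ m.zero_le (by simp) ?_
  · simp [loop, Dir.left, Dir.vec, Prod.le_def]
  · simp [paint, highwayWindow, loop, Dir.left, Dir.vec, Prod.le_def, -Fin.ofNat_eq_cast]
  · intro i j
    fin_cases i <;> fin_cases j <;>
      simp [windowCell, highwayWindow, loop, Dir.left, Dir.vec]

theorem update_paint {α : Type*} (M : Matrix (Fin 4) (Fin 5) α) (C : Cell → α) (i j) (a : α) :
    Function.update (paint M C) (windowCell i j) a =
      paint (M.updateRow i (Function.update (M i) j a)) C := by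
  have hinj : ∀ i' j', windowCell i' j' = windowCell i j ↔ i' = i ∧ j' = j := by
    simp [windowCell, Fin.val_inj, and_comm]
  have hmem : windowCell i j ∈ Set.Icc (-2, -1) (2, 2) := by
    revert i j
    simp [Fin.forall_fin_succ, windowCell, Prod.le_def]
  refine eq_paint (fun i' j' => ?_) fun q hq => ?_
  · rw [Function.update_apply, Matrix.updateRow_apply, Function.update_apply, paint_windowCell]
    grind
  · rw [Function.update_of_ne (ne_of_mem_of_not_mem hmem hq).symm, paint, if_neg hq]

theorem Reads.paint_turnLeft {M : Matrix (Fin 4) (Fin 5) (ZMod (m + 1))} {C : Cell → ZMod (m + 1)}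
    {p : Cell} {d : Dir} {a : ZMod (m + 1)} {w : List (ZMod (m + 1))} {B : Config (m + 1)}
    (i : Fin 4) (j : Fin 5) (hp : p = windowCell i j) (hM : M i j = a) (ha : a ≠ -1)
    (h : Reads (isLPowR m) (paint (M.updateRow i (Function.update (M i) j (a + 1))) C,
      p + d.left.vec, d.left) w B) :
    Reads (isLPowR m) (paint M C, p, d) (a :: w) B := by
  subst hp
  exact .turnLeft (by rw [paint_windowCell, hM]) (isLPowR_eq_true.2 ha) (by rwa [update_paint])

theorem Reads.paint_turnRight {M : Matrix (Fin 4) (Fin 5) (ZMod (m + 1))} {C : Cell → ZMod (m + 1)}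
    {p : Cell} {d : Dir} {w : List (ZMod (m + 1))} {B : Config (m + 1)}
    (i : Fin 4) (j : Fin 5) (hp : p = windowCell i j) (hM : M i j = -1)
    (h : Reads (isLPowR m) (paint (M.updateRow i (Function.update (M i) j 0)) C,
      p + d.right.vec, d.right) w B) :
    Reads (isLPowR m) (paint M C, p, d) (-1 :: w) B := by
  subst hp
  exact .turnRight (by rw [paint_windowCell, hM]) isLPowR_neg_one
    (by rwa [update_paint, neg_add_cancel])

theorem reads_shortZigzag (C : Cell → ZMod (m + 1)) (hm : 0 < m) :
    Reads (isLPowR m) (paint (highwayWindow m 3) C, (0, -1), Dir.W) [-1, -2, -1]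
      (paint (highwayWindow m 4) C, (-1, 1), Dir.N) := by
  have hsucc : (-2 : ZMod (m + 1)) + 1 = -1 := by norm_num
  refine .paint_turnRight 3 2 rfl ?_ <|
    .paint_turnLeft 2 2 rfl ?_ (neg_two_ne_neg_one hm) <|
    .paint_turnRight 2 1 rfl ?_ <|
    Prod.ext (congrArg (paint · C) ?_) rfl
  rotate_right
  · ext i j
    fin_cases i <;> fin_cases j <;> simp [highwayWindow, Matrix.updateRow_apply, hsucc]
  all_goals simp [highwayWindow, Matrix.updateRow_apply]

theorem reads_longZigzag (C : Cell → ZMod (m + 1)) (hm : 1 < m) :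
    Reads (isLPowR m) (paint (highwayWindow m 5) C, (0, 1), Dir.E)
      [-2, 0, 0, 0, -1, -1, -1, 1, -1] (paint (highwayWindow m 6) C, (-2, 2), Dir.N) := by
  have h₀ : (0 : ZMod (m + 1)) ≠ -1 := mod_cast natCast_ne_neg_one (zero_lt_one.trans hm)
  have h₁ : (1 : ZMod (m + 1)) ≠ -1 := mod_cast natCast_ne_neg_one hm
  have hsucc : (-2 : ZMod (m + 1)) + 1 = -1 := by norm_num
  refine .paint_turnLeft 1 2 rfl ?_ (neg_two_ne_neg_one (zero_lt_one.trans hm)) <|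
    .paint_turnLeft 0 2 rfl ?_ h₀ <|
    .paint_turnLeft 0 1 rfl ?_ h₀ <|
    .paint_turnLeft 1 1 rfl ?_ h₀ <|
    .paint_turnRight 1 2 rfl ?_ <|
    .paint_turnRight 2 2 rfl ?_ <|
    .paint_turnRight 2 1 rfl ?_ <|
    .paint_turnLeft 1 1 rfl ?_ h₁ <|
    .paint_turnRight 1 0 rfl ?_ <|
    Prod.ext (congrArg (paint · C) ?_) rfl
  rotate_right
  · ext i j
    fin_cases i <;> fin_cases j <;> simp [highwayWindow, Matrix.updateRow_apply, one_add_one_eq_two]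
  all_goals simp [highwayWindow, Matrix.updateRow_apply, hsucc]

/-- The symbols read during one period of the highway. -/
def highwayWord (m : ℕ) : List (ZMod (m + 1)) :=
  roundsWord [0, 0, 0, 0] m ++ [-1] ++ (roundsWord [1, 0, 0, 0] (m - 1) ++ [-1]) ++
    (roundsWord [2, 0, 1, 0] (m - 2) ++ [-1]) ++ [-1, -2, -1] ++
    (roundsWord [0, 0, 0, 0] m ++ [-1]) ++ [-2, 0, 0, 0, -1, -1, -1, 1, -1]

theorem length_highwayWord (hm : 2 ≤ m) : (highwayWord m).length = 16 * m + 4 := by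
  simp [highwayWord, length_roundsWord]
  omega

theorem reads_highwayWord (C : Cell → ZMod (m + 1)) (hm : 2 ≤ m) :
    Reads (isLPowR m) (paint (highwayWindow m 0) C, (0, 0), Dir.N) (highwayWord m)
      (paint (highwayWindow m 6) C, (-2, 2), Dir.N) :=
  ((((reads_firstLoop C).append (reads_secondLoop C (by omega))).append
    (reads_thirdLoop C hm)).append (reads_shortZigzag C (by omega))).append
    (reads_fourthLoop C) |>.append (reads_longZigzag C hm)

/-- The nonzero symbols seen by the ant at the start of the highway. -/
def seed (n : ℕ) (q : Cell) : ZMod n :=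
  if q = (1, 0) ∨ q = (2, 0) then 1 else if q = (1, -1) then 2 else 0

theorem pic_one_zero {k : ℕ} : pic k 1 0 = seed (2 * k + 1) := by
  ext ⟨x, y⟩
  simp only [pic, seed, Prod.mk.injEq, Nat.cast_zero]
  grind

/-- The configurations at the start of a period of the highway: the highway leads up and to the
left, so that only the symbols at the cells `(x, y)` with `x ≤ 2` and `-1 ≤ y` matter. -/
def highwayStarts (n : ℕ) : Set (Config n) :=
  {A | Set.EqOn A.1 (seed n) (Set.Iic 2 ×ˢ Set.Ici (-1)) ∧ A.2 = ((0, 0), Dir.N)}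

theorem paint_highwayWindow_zero {C : Cell → ZMod (m + 1)}
    (hC : Set.EqOn C (seed (m + 1)) (Set.Iic 2 ×ˢ Set.Ici (-1))) :
    paint (highwayWindow m 0) C = C := by
  refine (eq_paint (fun i j => ?_) fun _ _ => rfl).symm
  rw [hC (by revert i j; simp [Fin.forall_fin_succ, windowCell])]
  fin_cases i <;> fin_cases j <;> simp [windowCell, highwayWindow, seed]

theorem eqOn_paint_highwayWindow_six {C : Cell → ZMod (m + 1)}
    (hC : Set.EqOn C (seed (m + 1)) (Set.Iic 2 ×ˢ Set.Ici (-1))) :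
    Set.EqOn (fun q => paint (highwayWindow m 6) C (q + (-2, 2))) (seed (m + 1))
      (Set.Iic 2 ×ˢ Set.Ici (-1)) := by
  rintro ⟨x, y⟩ ⟨hx : x ≤ 2, hy : -1 ≤ y⟩
  by_cases hxy : 0 ≤ x ∧ y ≤ 0
  · obtain ⟨hx', hy'⟩ := hxy
    interval_cases x <;> interval_cases y <;>
      simp [paint, highwayWindow, seed, Prod.le_def, -Fin.ofNat_eq_cast]
  · have hout : (x, y) + (-2, 2) ∉ Set.Icc ((-2, -1) : Cell) (2, 2) := by
      simp [Prod.le_def]; omega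
    have hquad : (x, y) + (-2, 2) ∈ (Set.Iic 2 ×ˢ Set.Ici (-1) : Set Cell) := by
      simp; omega
    dsimp only
    rw [paint, if_neg hout, hC hquad]
    simp [seed]
    grind

theorem exists_reads_highwayWord (hm : 2 ≤ m) {A : Config (m + 1)}
    (hA : A ∈ highwayStarts (m + 1)) :
    ∃ B ∈ highwayStarts (m + 1), ∃ v, Reads (isLPowR m) A (highwayWord m) (translate v B) := by
  obtain ⟨C, q⟩ := A
  obtain ⟨hC, rfl⟩ := hA
  refine ⟨(fun q => paint (highwayWindow m 6) C (q + (-2, 2)), (0, 0), Dir.N),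
    ⟨eqOn_paint_highwayWindow_six hC, rfl⟩, (-2, 2), ?_⟩
  simpa only [translate, sub_add_cancel, paint_highwayWindow_zero hC, zero_add, Prod.mk_add_mk]
    using reads_highwayWord C hm

end Window

section Period

variable {m : ℕ}

theorem idxsOf_neg_one_roundsWord {l : List ℕ} {r : ℕ} (hl : ∀ a ∈ l, a + r ≤ m) (s : ℕ) :
    (roundsWord l r : List (ZMod (m + 1))).idxsOf (-1) s = [] := by
  simp only [List.idxsOf_eq_nil_iff, roundsWord, List.mem_flatMap, List.mem_map, List.mem_range,
    beq_eq_false_iff_ne]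
  rintro _ ⟨j, hj, a, ha, rfl⟩
  exact natCast_ne_neg_one (by have := hl a ha; omega)

/-- The positions of the symbol `-1` in `highwayWord m`, that is, the times within a period at which
the ant turns right. -/
def rightTurns (m : ℕ) : List ℕ :=
  [4 * m, 8 * m - 3, 12 * m - 10, 12 * m - 9, 12 * m - 7, 16 * m - 6, 16 * m - 1, 16 * m,
    16 * m + 1, 16 * m + 3]

theorem idxsOf_neg_one_highwayWord (hm : 1 < m) :
    (highwayWord m).idxsOf (-1) = rightTurns m := by
  have h₀ : (0 : ZMod (m + 1)) ≠ -1 := mod_cast natCast_ne_neg_one (zero_lt_one.trans hm)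
  have h₁ : (1 : ZMod (m + 1)) ≠ -1 := mod_cast natCast_ne_neg_one hm
  have h₂ : (-2 : ZMod (m + 1)) ≠ -1 := neg_two_ne_neg_one (zero_lt_one.trans hm)
  simp only [highwayWord, List.idxsOf_append]
  rw [idxsOf_neg_one_roundsWord (by simp), idxsOf_neg_one_roundsWord (by simp; omega),
    idxsOf_neg_one_roundsWord (by simp; omega), idxsOf_neg_one_roundsWord (by simp)]
  simp [length_roundsWord, rightTurns, h₀, h₁, h₂]
  omega

variable {A : Config (m + 1)}

theorem symbol_iterate_eq_getElem_highwayWord (hm : 2 ≤ m) (hA : A ∈ highwayStarts (m + 1))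
    (t : ℕ) : symbol ((antStep (m + 1) (isLPowR m))^[t] A) =
      (highwayWord m)[t % (16 * m + 4)]'(by
        rw [length_highwayWord hm]; exact Nat.mod_lt t (Nat.succ_pos _)) := by
  have hpos : 0 < (highwayWord m).length := by rw [length_highwayWord hm]; exact Nat.succ_pos _
  simpa only [length_highwayWord hm] using
    symbol_iterate_eq_getElem_mod hpos (fun A => exists_reads_highwayWord hm) hA t

theorem symbol_iterate_eq_neg_one_iff (hm : 2 ≤ m) (hA : A ∈ highwayStarts (m + 1)) (t : ℕ) :
    symbol ((antStep (m + 1) (isLPowR m))^[t] A) = -1 ↔ t % (16 * m + 4) ∈ rightTurns m := by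
  rw [symbol_iterate_eq_getElem_highwayWord hm hA, ← idxsOf_neg_one_highwayWord hm,
    List.mem_idxsOf_iff_getElem_pos, beq_iff_eq]

theorem forall_symbol_iterate_eq_neg_one_iff (hm : 2 < m) (hA : A ∈ highwayStarts (m + 1))
    (t : ℕ) : (∀ i < 3, symbol ((antStep (m + 1) (isLPowR m))^[t + i] A) = -1) ↔
      t ≡ 16 * m - 1 [MOD 16 * m + 4] := by
  have hlt : t % (16 * m + 4) < 16 * m + 4 := Nat.mod_lt t (Nat.succ_pos _)
  have hlast : (16 * m - 1) % (16 * m + 4) = 16 * m - 1 := Nat.mod_eq_of_lt (by omega)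
  have hsmall : ∀ i < 3, i % (16 * m + 4) = i := fun i hi => Nat.mod_eq_of_lt (by omega)
  rw [Nat.ModEq, hlast]
  simp +contextual only [symbol_iterate_eq_neg_one_iff hm.le hA, Nat.add_mod_eq_ite, hsmall]
  generalize t % (16 * m + 4) = u at hlt
  simp only [rightTurns, List.mem_cons, List.not_mem_nil, or_false]
  constructor
  · intro h
    have h₀ := h 0 (by omega)
    have h₁ := h 1 (by omega)
    have h₂ := h 2 (by omega)
    split_ifs at h₀ h₁ h₂ <;> omega
  · rintro rfl i hi
    split_ifs <;> omega

theorem exists_apply_add_ne {α : Type*} {s : ℕ → α} {a : α} {b r L p : ℕ}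
    (h : ∀ t, (∀ i < b, s (t + i) = a) ↔ t ≡ r [MOD L]) (hp : 0 < p) (hpL : p < L) :
    ∃ t, s (t + p) ≠ s t := by
  by_contra! hperiod
  have hr : r + p ≡ r [MOD L] := (h _).1 fun i hi => by
    rw [Nat.add_right_comm, hperiod, (h r).2 rfl i hi]
  exact Nat.not_dvd_of_pos_of_lt hp hpL (Nat.add_modEq_left_iff.1 hr)

end Period

end Ant

open Ant in
theorem l2kr_harmonic_least_period_general {m : ℕ} (hm : 2 < m) {A : Config (m + 1)}
    (hA : A ∈ highwayStarts (m + 1)) :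
    (∀ t, symbol ((antStep (m + 1) (isLPowR m))^[t + (16 * m + 4)] A) =
      symbol ((antStep (m + 1) (isLPowR m))^[t] A)) ∧
    ∀ p, 0 < p → p < 16 * m + 4 →
      ∃ t, symbol ((antStep (m + 1) (isLPowR m))^[t + p] A) ≠
        symbol ((antStep (m + 1) (isLPowR m))^[t] A) := by
  refine ⟨fun t => ?_, fun p => exists_apply_add_ne
    (s := fun t => symbol ((antStep (m + 1) (isLPowR m))^[t] A))
    (forall_symbol_iterate_eq_neg_one_iff hm hA)⟩
  simp only [symbol_iterate_eq_getElem_highwayWord hm.le hA, Nat.add_mod_right]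

/-- least period of the harmonic highway. For `k > 1`, the trace
of the ant `L^{2k}R` started from `(C_{k,1}^{0}, (0,0), ↑)` is periodic of period
`32k+4`, and `32k+4` is its smallest period. -/
theorem l2kr_harmonic_least_period (k : ℕ) (hk : 1 < k) :
    (∀ t : ℕ, trace k 1 (t + (32 * k + 4)) = trace k 1 t) ∧
    (∀ p : ℕ, 0 < p → p < 32 * k + 4 → ∃ t : ℕ, trace k 1 (t + p) ≠ trace k 1 t) := by
  rw [show 32 * k = 16 * (2 * k) by omega]
  exact l2kr_harmonic_least_period_general (m := 2 * k) (by omega)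
    ⟨fun q _ => congrFun Ant.pic_one_zero q, rfl⟩
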